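/- Let μ be a probability measure on the unit circle S¹ that is not concentrated in one point, with K-transform K_μ. Assume: K_μ′(z) ≠ 0 for all z ∈ 𝔻; the limit v(z) = lim_{n→∞} −K_μ^{∘n}(z)/(K_μ^{∘n})′(z) exists locally uniformly on 𝔻; v is of the form v(z) = α·z·u(z) with a nonzero constant α ∈ ℂ and a holomorphic function u : 𝔻 → ℂ with Re u(z) ≥ 0 for all z ∈ 𝔻; and K_μ′(0) = e^{−t₀·u(0)} for some t₀ ≥ 0. Then μ can be embedded into a continuous monotone convolution semigroup: there exists a continuous composition semigroup of K-transforms (K_t)_{t≥0} with generator u such that K_μ = K_{t₀}. -/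

import Mathlib

/-!
Write `K = Km μ`. Since `Re ψ_μ > -1/2`, `K` is a holomorphic self-map of the disc fixing `0`.

The chain rule `(K^{n+1})' = ((K^n)' ∘ K) K'` turns the limit into the invariance
`v ∘ K = K' v` (`limit_comp`), so the field `z u(z)` is invariant under `K` as well. Each
approximant has derivative `-1` at `0`, hence so does `v` (`deriv_limit`), which forces `u 0 ≠ 0`
and then, by the open mapping theorem, `u ≠ 0` on the whole disc (`ne_zero_of_re_nonneg`).

The semigroup is the flow of `w' = -w u(w)`. In the form `w(t) = z exp (-∫₀ᵗ u(w))` the condition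
`Re u ≥ 0` keeps all Picard iterates in the disc of radius `‖z‖`, so the flow exists for all
`t ≥ 0` (`exists_flow_line`); Gronwall's inequality gives continuity in `z` and the semigroup law.

Because `u` has no zeros, there is a Koenigs function `σ(z) = z e^{H(z)}` with
`z u(z) σ'(z) = u(0) σ(z)` and `σ' ≠ 0`. The flow satisfies `σ ∘ K_t = e^{-t u(0)} σ`, which makes
`K_t` holomorphic (locally it is `σ⁻¹ ∘ (e^{-t u(0)} σ)`), while the invariance gives
`σ ∘ K = K'(0) σ`. As `K'(0) = e^{-t₀ u(0)}` and `σ` is injective near `0`, `K` and `K_{t₀}` agree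
near `0`, hence on the disc by the identity theorem.
-/

open MeasureTheory Metric

noncomputable instance : MeasurableSpace Circle := borel Circle
instance : BorelSpace Circle := ⟨rfl⟩

/-- `ψ_μ(z) = ∫_{S¹} zx/(1-zx) dμ(x)` for a measure `μ` on the unit circle. -/
noncomputable def psiM (μ : Measure Circle) (z : ℂ) : ℂ :=
  ∫ x : Circle, (z * x) / (1 - z * x) ∂μ

/-- The K-transform `K_μ(z) = ψ_μ(z)/(1 + ψ_μ(z))` of a measure on the unit circle. -/
noncomputable def Km (μ : Measure Circle) (z : ℂ) : ℂ :=
  psiM μ z / (1 + psiM μ z)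

open Set Filter

open Topology

/-! ### The flow of `w' = -w u(w)` -/

lemma norm_exp_neg_sub_le {a b : ℂ} (ha : 0 ≤ a.re) (hb : 0 ≤ b.re) :
    ‖Complex.exp (-a) - Complex.exp (-b)‖ ≤ ‖a - b‖ := by
  have hconv : Convex ℝ {c : ℂ | 0 ≤ c.re} := convex_halfSpace_re_ge 0
  have := hconv.norm_image_sub_le_of_norm_hasDerivWithin_le
    (f := fun c : ℂ => Complex.exp (-c)) (f' := fun c => -Complex.exp (-c)) (C := 1)
    (x := b) (y := a) (fun c _ => ?_) (fun c hc => ?_) hb ha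
  · simpa using this
  · simpa using ((hasDerivAt_neg c).cexp).hasDerivWithinAt
  · simp only [mem_ofPred_eq] at hc
    simp [Complex.norm_exp, hc]

lemma exists_bounds_on_closedBall {u : ℂ → ℂ} (hu : DifferentiableOn ℂ u (ball (0 : ℂ) 1))
    {r : ℝ} (hr : r < 1) : ∃ L B : ℝ, 0 < L ∧ 0 < B ∧
      (∀ x ∈ closedBall (0 : ℂ) r, ‖u x‖ ≤ B) ∧
      (∀ x ∈ closedBall (0 : ℂ) r, ∀ y ∈ closedBall (0 : ℂ) r, ‖u x - u y‖ ≤ L * ‖x - y‖) := by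
  have hsub : closedBall (0 : ℂ) r ⊆ ball 0 1 := closedBall_subset_ball hr
  obtain ⟨L, hL⟩ := (isCompact_closedBall (0 : ℂ) r).exists_bound_of_continuousOn
    ((hu.deriv isOpen_ball).continuousOn.mono hsub)
  obtain ⟨B, hB⟩ := (isCompact_closedBall (0 : ℂ) r).exists_bound_of_continuousOn
    (hu.continuousOn.mono hsub)
  refine ⟨max L 1, max B 1, by positivity, by positivity,
    fun x hx => (hB x hx).trans (le_max_left _ _), fun x hx y hy => ?_⟩
  refine (convex_closedBall (0 : ℂ) r).norm_image_sub_le_of_norm_deriv_le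
    (fun c hc => (hu c (hsub hc)).differentiableAt (isOpen_ball.mem_nhds (hsub hc)))
    (fun c hc => (hL c hc).trans (le_max_left _ _)) hy hx

/-- The Picard operator for `w' = -w u(w)`, `w 0 = z`, in exponential form. The integral stops
at `0` for negative times, which makes iterates globally defined functions of norm at most `‖z‖`. -/
noncomputable def picardOp (u : ℂ → ℂ) (z : ℂ) (f : ℝ → ℂ) (t : ℝ) : ℂ :=
  z * Complex.exp (-∫ s in (0 : ℝ)..max t 0, u (f s))

section Picard

variable {u : ℂ → ℂ} {z : ℂ} {f g : ℝ → ℂ}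

lemma intervalIntegral_re_nonneg (h : ∀ t, 0 ≤ (u (f t)).re)
    (hi : ∀ a b : ℝ, IntervalIntegrable (fun s => u (f s)) volume a b) {t : ℝ} (ht : 0 ≤ t) :
    0 ≤ (∫ s in (0 : ℝ)..t, u (f s)).re := by
  have := Complex.reCLM.intervalIntegral_comp_comm (hi 0 t)
  simp only [Complex.reCLM_apply] at this
  rw [← this]
  exact intervalIntegral.integral_nonneg ht fun s _ => h s

lemma norm_picardOp_le (h : ∀ t, 0 ≤ (u (f t)).re)
    (hi : ∀ a b : ℝ, IntervalIntegrable (fun s => u (f s)) volume a b) (t : ℝ) :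
    ‖picardOp u z f t‖ ≤ ‖z‖ := by
  rw [picardOp, norm_mul, Complex.norm_exp]
  refine mul_le_of_le_one_right (norm_nonneg _) (Real.exp_le_one_iff.2 ?_)
  simpa using intervalIntegral_re_nonneg h hi (le_max_right t 0)

lemma continuous_picardOp (hi : ∀ a b : ℝ, IntervalIntegrable (fun s => u (f s)) volume a b) :
    Continuous (picardOp u z f) := by
  have h1 := intervalIntegral.continuous_primitive hi 0
  have h2 : Continuous fun t : ℝ => ∫ s in (0 : ℝ)..max t 0, u (f s) :=
    h1.comp (continuous_id.max continuous_const)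
  unfold picardOp
  fun_prop

end Picard

/-- Since `Re u ≥ 0`, every Picard iterate stays in the disc of radius `‖z‖`, so the iteration
converges for all times and no continuation argument is needed. -/
lemma exists_flow_line {u : ℂ → ℂ} (hu : DifferentiableOn ℂ u (ball (0 : ℂ) 1))
    (hure : ∀ z ∈ ball (0 : ℂ) 1, 0 ≤ (u z).re) {z : ℂ} (hz : z ∈ ball (0 : ℂ) 1) :
    ∃ w : ℝ → ℂ, Continuous w ∧ w 0 = z ∧ (∀ t, ‖w t‖ ≤ ‖z‖) ∧
      ∀ t ≥ (0 : ℝ), HasDerivWithinAt w (-(w t) * u (w t)) (Ici 0) t := by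
  have hz1 : ‖z‖ < 1 := by simpa using hz
  obtain ⟨L, B, hL0, hB0, hB, hL⟩ := exists_bounds_on_closedBall hu hz1
  have hsub : closedBall (0 : ℂ) ‖z‖ ⊆ ball 0 1 := closedBall_subset_ball hz1
  let w : ℕ → ℝ → ℂ := fun n => (picardOp u z)^[n] (fun _ => z)
  have hw_succ : ∀ n, w (n + 1) = picardOp u z (w n) := fun n =>
    Function.iterate_succ_apply' _ _ _
  have hmemc : ∀ {f : ℝ → ℂ}, (∀ t, ‖f t‖ ≤ ‖z‖) → ∀ t, f t ∈ closedBall (0 : ℂ) ‖z‖ :=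
    fun h t => by simpa using h t
  have hcu : ∀ {f : ℝ → ℂ}, Continuous f → (∀ t, ‖f t‖ ≤ ‖z‖) → Continuous fun s => u (f s) :=
    fun hf h => (hu.continuousOn.mono hsub).comp_continuous hf (hmemc h)
  have hw : ∀ n, Continuous (w n) ∧ ∀ t, ‖w n t‖ ≤ ‖z‖ := by
    intro n
    induction n with
    | zero => exact ⟨continuous_const, fun _ => le_rfl⟩
    | succ n ih =>
      rw [hw_succ]
      have hi : ∀ a b : ℝ, IntervalIntegrable (fun s => u (w n s)) volume a b :=
        fun a b => (hcu ih.1 ih.2).intervalIntegrable a b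
      exact ⟨continuous_picardOp hi,
        norm_picardOp_le (fun t => hure _ (hsub (hmemc ih.2 t))) hi⟩
  have hwi : ∀ n (a b : ℝ), IntervalIntegrable (fun s => u (w n s)) volume a b :=
    fun n a b => (hcu (hw n).1 (hw n).2).intervalIntegrable a b
  -- The weight `exp (2 L t)` turns the Picard step into a contraction by `1 / 2` for all times.
  have hstep : ∀ n t, ‖w (n + 1) t - w n t‖ ≤ 2 * (1 / 2) ^ n * Real.exp (2 * L * max t 0) := by
    intro n
    induction n with
    | zero =>
      intro t
      have h1 : ‖w 1 t - w 0 t‖ ≤ 2 := by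
        have := norm_sub_le (w 1 t) (w 0 t)
        have h2 := (hw 1).2 t
        have h3 := (hw 0).2 t
        linarith
      have h2 : 1 ≤ Real.exp (2 * L * max t 0) := Real.one_le_exp (by positivity)
      simp only [zero_add, pow_zero]
      linarith
    | succ n ih =>
      intro t
      set T := max t 0 with hT
      have hT0 : 0 ≤ T := le_max_right _ _
      have e1 : w (n + 1 + 1) t - w (n + 1) t = z * (Complex.exp (-∫ s in (0 : ℝ)..T, u (w (n+1) s))
          - Complex.exp (-∫ s in (0 : ℝ)..T, u (w n s))) := by
        rw [hw_succ (n + 1), mul_sub]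
        congr 1
        rw [hw_succ n, picardOp]
      rw [e1, norm_mul]
      have hre : ∀ m, 0 ≤ (∫ s in (0 : ℝ)..T, u (w m s)).re := fun m =>
        intervalIntegral_re_nonneg (fun t => hure _ (hsub (hmemc (hw m).2 t))) (hwi m) hT0
      have e2 := norm_exp_neg_sub_le (hre (n + 1)) (hre n)
      rw [← intervalIntegral.integral_sub (hwi _ _ _) (hwi _ _ _)] at e2
      have hd : ∀ s : ℝ, HasDerivAt (fun s => (1 / 2 : ℝ) ^ n * Real.exp (2 * L * s))
          (L * (2 * (1 / 2) ^ n * Real.exp (2 * L * s))) s := by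
        intro s
        refine (((((hasDerivAt_id s).const_mul (2 * L)).exp).const_mul
          ((1 / 2 : ℝ) ^ n))).congr_deriv ?_
        simp only [id]; ring
      have hgc : Continuous fun s : ℝ => L * (2 * (1 / 2) ^ n * Real.exp (2 * L * s)) := by
        fun_prop
      have e3 : ‖∫ s in (0 : ℝ)..T, (u (w (n+1) s) - u (w n s))‖ ≤
          ∫ s in (0 : ℝ)..T, L * (2 * (1 / 2) ^ n * Real.exp (2 * L * s)) := by
        refine intervalIntegral.norm_integral_le_of_norm_le hT0 ?_ (hgc.intervalIntegrable _ _)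
        refine Eventually.of_forall fun s hs => ?_
        refine (hL _ (hmemc (hw _).2 s) _ (hmemc (hw _).2 s)).trans ?_
        have := ih s
        rw [max_eq_left hs.1.le] at this
        gcongr
      rw [intervalIntegral.integral_eq_sub_of_hasDerivAt (fun s _ => hd s)
        (hgc.intervalIntegrable _ _)] at e3
      have e4 : ‖z‖ * ‖Complex.exp (-∫ s in (0 : ℝ)..T, u (w (n+1) s))
          - Complex.exp (-∫ s in (0 : ℝ)..T, u (w n s))‖ ≤ _ :=
        mul_le_of_le_one_left (norm_nonneg _) hz1.le
      have e5 : 0 < (1 / 2 : ℝ) ^ n := by positivity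
      refine (e4.trans (e2.trans e3)).trans ?_
      rw [pow_succ]
      simp only [mul_zero, Real.exp_zero]
      linarith
  have hcauchy : ∀ t, ∃ l, Tendsto (fun n => w n t) atTop (𝓝 l) := by
    intro t
    refine cauchySeq_tendsto_of_complete (cauchySeq_of_le_geometric (1 / 2)
      (2 * Real.exp (2 * L * max t 0)) (by norm_num) fun n => ?_)
    rw [dist_comm, dist_eq_norm]
    refine (hstep n t).trans (le_of_eq (by ring))
  choose W hW using hcauchy
  have hWle : ∀ t, ‖W t‖ ≤ ‖z‖ := fun t =>
    le_of_tendsto (hW t).norm (Eventually.of_forall fun n => (hw n).2 t)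
  have huW : ∀ s, Tendsto (fun n => u (w n s)) atTop (𝓝 (u (W s))) := by
    intro s
    have h1 := hu.continuousOn.continuousAt (isOpen_ball.mem_nhds (hsub (hmemc hWle s)))
    exact h1.tendsto.comp (hW s)
  have hWmeas : AEStronglyMeasurable (fun s => u (W s)) (volume : Measure ℝ) :=
    aestronglyMeasurable_of_tendsto_ae atTop
      (fun n => (hcu (hw n).1 (hw n).2).aestronglyMeasurable) (Eventually.of_forall huW)
  have hWi : ∀ a b : ℝ, IntervalIntegrable (fun s => u (W s)) volume a b := by
    intro a b
    refine (intervalIntegrable_const (c := B)).mono_fun hWmeas.restrict ?_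
    refine Eventually.of_forall fun s => ?_
    simpa [abs_of_pos hB0] using hB _ (hmemc hWle s)
  have hfix : W = picardOp u z W := by
    funext t
    refine tendsto_nhds_unique ((tendsto_add_atTop_iff_nat 1).2 (hW t)) ?_
    simp only [hw_succ]
    have h1 : Tendsto (fun n => ∫ s in (0 : ℝ)..max t 0, u (w n s)) atTop
        (𝓝 (∫ s in (0 : ℝ)..max t 0, u (W s))) := by
      refine intervalIntegral.tendsto_integral_filter_of_dominated_convergence (fun _ => B)
        (Eventually.of_forall fun n => (hcu (hw n).1 (hw n).2).aestronglyMeasurable) ?_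
        intervalIntegrable_const (Eventually.of_forall fun s _ => huW s)
      exact Eventually.of_forall fun n => Eventually.of_forall fun s _ =>
        hB _ (hmemc (hw n).2 s)
    exact ((Complex.continuous_exp.tendsto _).comp h1.neg).const_mul z
  have hWc : Continuous W := by rw [hfix]; exact continuous_picardOp hWi
  refine ⟨W, hWc, ?_, hWle, fun t ht => ?_⟩
  · rw [hfix]; simp [picardOp]
  · have h1 : HasDerivAt (fun t => ∫ s in (0 : ℝ)..t, u (W s)) (u (W t)) t :=
      intervalIntegral.integral_hasDerivAt_right (hWi _ _)
        ((hcu hWc hWle).stronglyMeasurableAtFilter _ _) (hcu hWc hWle).continuousAt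
    have h2 := (h1.neg.cexp.const_mul z).hasDerivWithinAt (s := Ici 0)
    have heq : ∀ s ∈ Ici (0 : ℝ), W s = z * Complex.exp (-∫ x in (0 : ℝ)..s, u (W x)) := by
      intro s hs
      conv_lhs => rw [hfix]
      rw [picardOp, max_eq_left hs]
    refine (h2.congr heq (heq t ht)).congr_deriv ?_
    rw [← mul_assoc, Pi.neg_apply, ← heq t ht]; ring

/-- `K t z` is the solution at time `t ≥ 0` of `w' = -w u(w)` started at `z` in the unit disc. -/
structure IsFlow (u : ℂ → ℂ) (K : ℝ → ℂ → ℂ) : Prop where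
  zero : ∀ z ∈ ball (0 : ℂ) 1, K 0 z = z
  cont : ∀ z ∈ ball (0 : ℂ) 1, Continuous fun t => K t z
  norm_le : ∀ z ∈ ball (0 : ℂ) 1, ∀ t, ‖K t z‖ ≤ ‖z‖
  deriv : ∀ z ∈ ball (0 : ℂ) 1, ∀ t ≥ (0 : ℝ),
    HasDerivWithinAt (fun s => K s z) (-(K t z) * u (K t z)) (Ici 0) t

lemma exists_isFlow {u : ℂ → ℂ} (hu : DifferentiableOn ℂ u (ball (0 : ℂ) 1))
    (hure : ∀ z ∈ ball (0 : ℂ) 1, 0 ≤ (u z).re) : ∃ K, IsFlow u K := by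
  choose! W hW using fun (z : ℂ) (hz : z ∈ ball (0 : ℂ) 1) => exists_flow_line hu hure hz
  exact ⟨fun t z => W z t, fun z hz => (hW z hz).2.1, fun z hz => (hW z hz).1,
    fun z hz => (hW z hz).2.2.1, fun z hz => (hW z hz).2.2.2⟩

namespace IsFlow

variable {u : ℂ → ℂ} {K : ℝ → ℂ → ℂ}

lemma mem_ball (h : IsFlow u K) {z : ℂ} (hz : z ∈ ball (0 : ℂ) 1) (t : ℝ) :
    K t z ∈ ball (0 : ℂ) 1 := by
  have := h.norm_le z hz t
  simp only [mem_ball_zero_iff] at hz ⊢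
  linarith

lemma map_zero (h : IsFlow u K) (t : ℝ) : K t 0 = 0 := by
  simpa using h.norm_le 0 (by simp) t

lemma bounds (hu : DifferentiableOn ℂ u (ball (0 : ℂ) 1)) {r : ℝ} (hr : r < 1) :
    ∃ L B : ℝ, 0 < L ∧ 0 < B ∧ (∀ x ∈ closedBall (0 : ℂ) r, ‖-x * u x‖ ≤ B) ∧
      LipschitzOnWith L.toNNReal (fun x => -x * u x) (closedBall (0 : ℂ) r) := by
  obtain ⟨L, B, hL0, hB0, hB, hL⟩ := exists_bounds_on_closedBall
    (u := fun x => -x * u x) (differentiableOn_id.neg.mul hu) hr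
  refine ⟨L, B, hL0, hB0, hB, LipschitzOnWith.of_dist_le_mul fun x hx y hy => ?_⟩
  rw [dist_eq_norm, dist_eq_norm, Real.coe_toNNReal _ hL0.le]
  exact hL x hx y hy

lemma continuousAt (h : IsFlow u K) (hu : DifferentiableOn ℂ u (ball (0 : ℂ) 1))
    {z : ℂ} (hz : z ∈ ball (0 : ℂ) 1) {t : ℝ} (ht : 0 ≤ t) : ContinuousAt (K t) z := by
  have hz1 : ‖z‖ < 1 := by simpa using hz
  obtain ⟨r, hr0, hr1⟩ := exists_between hz1
  obtain ⟨L, B, hL0, hB0, hB, hL⟩ := bounds hu hr1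
  have key : ∀ y ∈ ball (0 : ℂ) r, dist (K t y) (K t z) ≤ dist y z * Real.exp (L * t) := by
    intro y hy
    have hyr : ‖y‖ < r := by simpa using hy
    have hy1 : y ∈ ball (0 : ℂ) 1 := by simpa using hyr.trans hr1
    have := dist_le_of_trajectories_ODE_of_mem (v := fun _ x => -x * u x) (a := 0) (b := t)
      (s := fun _ => closedBall (0 : ℂ) r) (K := L.toNNReal) (δ := dist y z)
      (f := fun s => K s y) (g := fun s => K s z) (fun _ _ => hL) (h.cont y hy1).continuousOn
      (fun s hs => (h.deriv y hy1 s hs.1).mono (Ici_subset_Ici.2 hs.1))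
      (fun s _ => by simpa using (h.norm_le y hy1 s).trans hyr.le)
      (h.cont z hz).continuousOn
      (fun s hs => (h.deriv z hz s hs.1).mono (Ici_subset_Ici.2 hs.1))
      (fun s _ => by simpa using (h.norm_le z hz s).trans hr0.le)
      (by simp only [h.zero y hy1, h.zero z hz]; exact le_rfl) t ⟨ht, le_rfl⟩
    simpa [hL0.le] using this
  refine tendsto_iff_dist_tendsto_zero.2 (squeeze_zero' (Eventually.of_forall fun _ => dist_nonneg)
    (g := fun y => dist y z * Real.exp (L * t)) ?_ ?_)
  · filter_upwards [isOpen_ball.mem_nhds (show z ∈ ball (0 : ℂ) r by simpa using hr0)] using key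
  · have : Continuous fun y => dist y z * Real.exp (L * t) := by fun_prop
    simpa using this.tendsto z

lemma add (h : IsFlow u K) (hu : DifferentiableOn ℂ u (ball (0 : ℂ) 1))
    {s t : ℝ} (hs : 0 ≤ s) (ht : 0 ≤ t) {z : ℂ} (hz : z ∈ ball (0 : ℂ) 1) :
    K (s + t) z = K s (K t z) := by
  have hz1 : ‖z‖ < 1 := by simpa using hz
  obtain ⟨L, B, hL0, hB0, hB, hL⟩ := bounds hu hz1
  have hKt := h.mem_ball hz t
  have := ODE_solution_unique_of_mem_Icc_right (v := fun _ x => -x * u x) (a := 0) (b := s)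
    (s := fun _ => closedBall (0 : ℂ) ‖z‖) (K := L.toNNReal)
    (f := fun s => K (s + t) z) (g := fun s => K s (K t z)) (fun _ _ => hL)
    ((h.cont z hz).comp (continuous_id.add continuous_const)).continuousOn
    (fun s hs => ?_)
    (fun s _ => by simpa using h.norm_le z hz _)
    (h.cont _ hKt).continuousOn
    (fun s hs => (h.deriv _ hKt s hs.1).mono (Ici_subset_Ici.2 hs.1))
    (fun s _ => by simpa using (h.norm_le _ hKt s).trans (h.norm_le z hz t))
    (by simp only [h.zero _ hKt, zero_add])
  · exact this ⟨hs, le_rfl⟩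
  · have h1 := h.deriv z hz (s + t) (add_nonneg hs.1 ht)
    have h2 : HasDerivWithinAt (fun x : ℝ => x + t) 1 (Ici s) s :=
      ((hasDerivAt_id s).add_const t).hasDerivWithinAt
    have h3 := HasDerivWithinAt.scomp s h1 h2 (fun x hx => add_nonneg (hs.1.trans hx) ht)
    simpa [Function.comp_def] using h3

lemma tendstoLocallyUniformlyOn (h : IsFlow u K) (hu : DifferentiableOn ℂ u (ball (0 : ℂ) 1))
    {t : ℝ} (ht : 0 ≤ t) :
    TendstoLocallyUniformlyOn K (K t) (𝓝[Ici 0] t) (ball (0 : ℂ) 1) := by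
  rw [Metric.tendstoLocallyUniformlyOn_iff]
  intro ε hε z hz
  have hz1 : ‖z‖ < 1 := by simpa using hz
  obtain ⟨r, hr0, hr1⟩ := exists_between hz1
  obtain ⟨L, B, hL0, hB0, hB, hL⟩ := bounds hu hr1
  refine ⟨ball 0 r, mem_nhdsWithin_of_mem_nhds
    (isOpen_ball.mem_nhds (by simpa using hr0)), ?_⟩
  have h1 : ∀ᶠ s in 𝓝[Ici 0] t, dist t s < ε / B :=
    mem_nhdsWithin_of_mem_nhds (by
      filter_upwards [Metric.ball_mem_nhds t (div_pos hε hB0)] with s hs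
      rwa [dist_comm])
  filter_upwards [h1, self_mem_nhdsWithin] with s hs hs0 y hy
  have hyr : ‖y‖ < r := by simpa using hy
  have hy1 : y ∈ ball (0 : ℂ) 1 := by simpa using hyr.trans hr1
  have h2 := (convex_Ici (0 : ℝ)).norm_image_sub_le_of_norm_hasDerivWithin_le
    (f := fun s => K s y) (C := B) (fun x hx => h.deriv y hy1 x hx)
    (fun x _ => hB _ (by simpa using (h.norm_le y hy1 x).trans hyr.le)) hs0 (mem_Ici.2 ht)
  rw [dist_eq_norm]
  refine h2.trans_lt ?_
  rw [← dist_eq_norm]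
  rwa [lt_div_iff₀' hB0] at hs

end IsFlow

/-! ### The K-transform of a probability measure -/

section KTransform

lemma one_sub_norm_le {z : ℂ} (x : Circle) : 1 - ‖z‖ ≤ ‖1 - z * x‖ := by
  have := norm_sub_norm_le (1 : ℂ) (z * x)
  simpa [Circle.norm_coe] using this

lemma one_sub_mul_ne_zero {z : ℂ} (hz : z ∈ ball (0 : ℂ) 1) (x : Circle) : 1 - z * x ≠ 0 := by
  have hz1 : ‖z‖ < 1 := by simpa using hz
  rw [← norm_pos_iff]
  linarith [one_sub_norm_le (z := z) x]

lemma continuous_psiM_integrand {z : ℂ} (hz : z ∈ ball (0 : ℂ) 1) :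
    Continuous fun x : Circle => (z * x) / (1 - z * x) :=
  Continuous.div (by fun_prop) (by fun_prop) (one_sub_mul_ne_zero hz)

lemma integrable_psiM_integrand (μ : Measure Circle) [IsProbabilityMeasure μ] {z : ℂ}
    (hz : z ∈ ball (0 : ℂ) 1) : Integrable (fun x : Circle => (z * x) / (1 - z * x)) μ :=
  (continuous_psiM_integrand hz).integrable_of_hasCompactSupport
    (HasCompactSupport.of_compactSpace _)

lemma differentiableOn_psiM (μ : Measure Circle) [IsProbabilityMeasure μ] :
    DifferentiableOn ℂ (psiM μ) (ball (0 : ℂ) 1) := by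
  intro z hz
  have hz1 : ‖z‖ < 1 := by simpa using hz
  obtain ⟨r, hr0, hr1⟩ := exists_between hz1
  have hsub : ball (0 : ℂ) r ⊆ ball 0 1 := ball_subset_ball hr1.le
  refine (hasDerivAt_integral_of_dominated_loc_of_deriv_le (s := ball (0 : ℂ) r)
    (x₀ := z) (F := fun (z : ℂ) (x : Circle) => (z * x) / (1 - z * x))
    (F' := fun (z : ℂ) (x : Circle) => (x : ℂ) / (1 - z * x) ^ 2)
    (bound := fun _ => 1 / (1 - r) ^ 2) (isOpen_ball.mem_nhds (by simpa using hr0))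
    ?_ (integrable_psiM_integrand μ hz) ?_ ?_ (integrable_const _)
    ?_).2.differentiableAt.differentiableWithinAt
  · filter_upwards [isOpen_ball.mem_nhds hz] with y hy
    exact (continuous_psiM_integrand hy).aestronglyMeasurable
  · exact (Continuous.div (by fun_prop) (by fun_prop)
      fun x => pow_ne_zero 2 (one_sub_mul_ne_zero hz x)).aestronglyMeasurable
  · refine Eventually.of_forall fun x y hy => ?_
    have hy1 : ‖y‖ < r := by simpa using hy
    have h1 := one_sub_norm_le (z := y) x
    have h2 : 0 < 1 - r := by linarith
    rw [norm_div, norm_pow, Circle.norm_coe]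
    gcongr
    linarith
  · refine Eventually.of_forall fun x y hy => ?_
    have h1 := one_sub_mul_ne_zero (hsub hy) x
    have h2 : HasDerivAt (fun y : ℂ => y * (x : ℂ)) x y := by
      simpa using (hasDerivAt_id y).mul_const (x : ℂ)
    have h3 := h2.div (h2.const_sub 1) h1
    refine h3.congr_deriv ?_
    congr 1
    ring

/-- `Re (ζ / (1 - ζ)) > -1/2` for `|ζ| < 1`, with a lower bound that depends only on `|ζ|`. -/
lemma re_integrand_ge {z : ℂ} (hz : z ∈ ball (0 : ℂ) 1) (x : Circle) :
    -1 / 2 + (1 - ‖z‖ ^ 2) / 8 ≤ ((z * x) / (1 - z * x)).re := by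
  have hz1 : ‖z‖ < 1 := by simpa using hz
  have hne := one_sub_mul_ne_zero hz x
  have hn : ‖z‖ = ‖z * (x : ℂ)‖ := by simp [Circle.norm_coe]
  rw [hn] at hz1 ⊢
  generalize z * (x : ℂ) = w at *
  have hsq : ‖w‖ ^ 2 < 1 := by nlinarith [norm_nonneg w]
  have hpos : 0 < Complex.normSq (1 - w) := Complex.normSq_pos.2 hne
  rw [Complex.sq_norm] at hsq ⊢
  rw [Complex.div_re, ← add_div, le_div_iff₀ hpos]
  have hle : Complex.normSq (1 - w) ≤ 4 := by
    simp only [Complex.normSq_apply, Complex.sub_re, Complex.sub_im, Complex.one_re,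
      Complex.one_im] at *
    nlinarith [sq_nonneg (w.re + 1), sq_nonneg w.im]
  have e : w.re * (1 - w).re + w.im * (1 - w).im =
      -1 / 2 * Complex.normSq (1 - w) + (1 - Complex.normSq w) / 2 := by
    simp only [Complex.normSq_apply, Complex.sub_re, Complex.sub_im, Complex.one_re,
      Complex.one_im]
    ring
  rw [e]
  nlinarith

lemma re_psiM_gt (μ : Measure Circle) [IsProbabilityMeasure μ] {z : ℂ}
    (hz : z ∈ ball (0 : ℂ) 1) : -1 / 2 < (psiM μ z).re := by
  have hz1 : ‖z‖ < 1 := by simpa using hz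
  have h1 : (psiM μ z).re = ∫ x : Circle, ((z * x) / (1 - z * x)).re ∂μ := by
    have := Complex.reCLM.integral_comp_comm (integrable_psiM_integrand μ hz)
    simpa [psiM] using this.symm
  have h2 : ∫ _ : Circle, (-1 / 2 + (1 - ‖z‖ ^ 2) / 8) ∂μ ≤ (psiM μ z).re := by
    rw [h1]
    exact integral_mono (integrable_const _) (integrable_psiM_integrand μ hz).re
      (re_integrand_ge hz)
  simp only [integral_const, probReal_univ, one_smul] at h2
  nlinarith [norm_nonneg z]

lemma one_add_psiM_ne_zero (μ : Measure Circle) [IsProbabilityMeasure μ] {z : ℂ}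
    (hz : z ∈ ball (0 : ℂ) 1) : 1 + psiM μ z ≠ 0 := by
  intro h
  have := re_psiM_gt μ hz
  have h2 := congrArg Complex.re h
  simp only [Complex.add_re, Complex.one_re, Complex.zero_re] at h2
  linarith

lemma differentiableOn_Km (μ : Measure Circle) [IsProbabilityMeasure μ] :
    DifferentiableOn ℂ (Km μ) (ball (0 : ℂ) 1) :=
  (differentiableOn_psiM μ).div ((differentiableOn_const 1).add (differentiableOn_psiM μ))
    fun _ hz => one_add_psiM_ne_zero μ hz

lemma mapsTo_Km (μ : Measure Circle) [IsProbabilityMeasure μ] :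
    MapsTo (Km μ) (ball (0 : ℂ) 1) (ball (0 : ℂ) 1) := by
  intro z hz
  have h1 := re_psiM_gt μ hz
  have h2 : 0 < ‖1 + psiM μ z‖ := norm_pos_iff.2 (one_add_psiM_ne_zero μ hz)
  rw [mem_ball_zero_iff, Km, norm_div, div_lt_one h2]
  refine lt_of_pow_lt_pow_left₀ 2 h2.le ?_
  rw [Complex.sq_norm, Complex.sq_norm, Complex.normSq_apply, Complex.normSq_apply]
  simp only [Complex.add_re, Complex.one_re, Complex.add_im, Complex.one_im]
  nlinarith

lemma Km_zero (μ : Measure Circle) : Km μ 0 = 0 := by simp [Km, psiM]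

end KTransform

/-! ### The Koenigs function -/

/-- `σ` is a Koenigs function for the vector field `-z u(z)`: it vanishes at `0` and is an
eigenfunction of the field with eigenvalue `-u 0`. It has the form `z e^{H(z)}`, and it is
a local coordinate at every point. -/
structure IsKoenigs (u σ H : ℂ → ℂ) : Prop where
  eq : ∀ z, σ z = z * Complex.exp (H z)
  diffH : DifferentiableOn ℂ H (ball (0 : ℂ) 1)
  deriv_ne : ∀ z ∈ ball (0 : ℂ) 1, deriv σ z ≠ 0
  eigen : ∀ z ∈ ball (0 : ℂ) 1, z * u z * deriv σ z = u 0 * σ z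

lemma exists_isKoenigs {u : ℂ → ℂ} (hu : DifferentiableOn ℂ u (ball (0 : ℂ) 1))
    (hune : ∀ z ∈ ball (0 : ℂ) 1, u z ≠ 0) : ∃ σ H, IsKoenigs u σ H := by
  have h0 : (0 : ℂ) ∈ ball (0 : ℂ) 1 := by simp
  -- `h z = (u 0 / u z - 1) / z`, with the singularity at `0` removed.
  have hd : DifferentiableOn ℂ (dslope (fun z => u 0 / u z) 0) (ball (0 : ℂ) 1) :=
    (Complex.differentiableOn_dslope (isOpen_ball.mem_nhds h0)).2
      ((differentiableOn_const _).div hu hune)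
  have hz : ∀ z, z * dslope (fun z => u 0 / u z) 0 z = u 0 / u z - 1 := by
    intro z
    have := sub_smul_dslope (fun z => u 0 / u z) 0 z
    simpa [div_self (hune 0 h0)] using this
  obtain ⟨H, hH⟩ := hd.isExactOn_ball
  have hσ : ∀ z ∈ ball (0 : ℂ) 1, HasDerivAt (fun z => z * Complex.exp (H z))
      (Complex.exp (H z) * (u 0 / u z)) z := by
    intro z hzb
    refine ((hasDerivAt_id z).mul (hH z hzb).cexp).congr_deriv ?_
    simp only [id]
    linear_combination Complex.exp (H z) * hz z
  refine ⟨fun z => z * Complex.exp (H z), H, fun _ => rfl,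
    fun z hzb => (hH z hzb).differentiableAt.differentiableWithinAt, fun z hzb => ?_,
    fun z hzb => ?_⟩
  · rw [(hσ z hzb).deriv]
    exact mul_ne_zero (Complex.exp_ne_zero _) (div_ne_zero (hune 0 h0) (hune z hzb))
  · rw [(hσ z hzb).deriv]
    have := hune z hzb
    field_simp

namespace IsKoenigs

variable {u σ H : ℂ → ℂ}

lemma diff (h : IsKoenigs u σ H) : DifferentiableOn ℂ σ (ball (0 : ℂ) 1) := by
  have : σ = fun z => z * Complex.exp (H z) := funext h.eq
  rw [this]
  exact differentiableOn_id.mul h.diffH.cexp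

lemma hasDerivAt (h : IsKoenigs u σ H) {z : ℂ} (hz : z ∈ ball (0 : ℂ) 1) :
    HasDerivAt σ (deriv σ z) z :=
  (h.diff.differentiableAt (isOpen_ball.mem_nhds hz)).hasDerivAt

lemma hasStrictDerivAt (h : IsKoenigs u σ H) {z : ℂ} (hz : z ∈ ball (0 : ℂ) 1) :
    HasStrictDerivAt σ (deriv σ z) z :=
  (h.diff.analyticAt (isOpen_ball.mem_nhds hz)).hasStrictDerivAt

lemma comp_flow (h : IsKoenigs u σ H) {K : ℝ → ℂ → ℂ} (hK : IsFlow u K) {z : ℂ}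
    (hz : z ∈ ball (0 : ℂ) 1) {t : ℝ} (ht : 0 ≤ t) :
    σ (K t z) = Complex.exp (-(t : ℂ) * u 0) * σ z := by
  -- `s ↦ e^{s u(0)} σ(K s z)` has zero derivative.
  have hd : ∀ s ≥ (0 : ℝ), HasDerivWithinAt (fun s : ℝ => Complex.exp (s * u 0) * σ (K s z)) 0
      (Ici 0) s := by
    intro s hs
    have h1 := (h.hasDerivAt (hK.mem_ball hz s)).comp_hasDerivWithinAt s (hK.deriv z hz s hs)
    have h2 : HasDerivAt (fun s : ℝ => Complex.exp (s * u 0)) (Complex.exp (s * u 0) * u 0) s := by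
      have h3 : HasDerivAt (fun s : ℂ => s * u 0) (u 0) (s : ℂ) := by
        simpa using (hasDerivAt_id (s : ℂ)).mul_const (u 0)
      exact h3.cexp.comp_ofReal
    refine (h2.hasDerivWithinAt.mul h1).congr_deriv ?_
    simp only [Function.comp_apply]
    linear_combination -Complex.exp (s * u 0) * h.eigen _ (hK.mem_ball hz s)
  have := constant_of_has_deriv_right_zero (a := 0) (b := t)
    (f := fun s : ℝ => Complex.exp (s * u 0) * σ (K s z))
    (fun s hs => ((hd s hs.1).continuousWithinAt).mono Icc_subset_Ici_self)
    (fun s hs => (hd s hs.1).mono (Ici_subset_Ici.2 hs.1)) t ⟨ht, le_rfl⟩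
  simp only [Complex.ofReal_zero, zero_mul, Complex.exp_zero, one_mul, hK.zero z hz] at this
  rw [← this, ← mul_assoc, ← Complex.exp_add]
  simp

/-- A continuous map that is holomorphic in the coordinate `σ` is holomorphic. This gives
holomorphy of the flow in the initial value. -/
lemma differentiableOn_flow (h : IsKoenigs u σ H) (hu : DifferentiableOn ℂ u (ball (0 : ℂ) 1))
    {K : ℝ → ℂ → ℂ} (hK : IsFlow u K) {t : ℝ} (ht : 0 ≤ t) :
    DifferentiableOn ℂ (K t) (ball (0 : ℂ) 1) := by
  intro z hz
  have hKz := hK.mem_ball hz t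
  have hs := h.hasStrictDerivAt hKz
  have hinv := (hs.to_localInverse (h.deriv_ne _ hKz)).hasDerivAt.differentiableAt
  have hleft := hs.eventually_left_inverse (h.deriv_ne _ hKz)
  have hcont := hK.continuousAt hu hz ht
  set g := hs.localInverse σ (deriv σ (K t z)) (K t z) (h.deriv_ne _ hKz) with hg
  have h1 : ∀ᶠ y in 𝓝 z, K t y = g (Complex.exp (-(t : ℂ) * u 0) * σ y) := by
    filter_upwards [hcont.eventually hleft, isOpen_ball.mem_nhds hz] with y hy hyb
    rw [← h.comp_flow hK hyb ht, hy]
  have h2 : DifferentiableAt ℂ (fun y => Complex.exp (-(t : ℂ) * u 0) * σ y) z :=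
    (h.hasDerivAt hz).differentiableAt.const_mul _
  rw [h.comp_flow hK hz ht] at hinv
  exact ((hinv.comp z h2).congr_of_eventuallyEq h1).differentiableWithinAt

/-- A self-map of the disc under which the field `z u(z)` is invariant acts on `σ` as
multiplication by its derivative at `0`. -/
lemma comp_of_invariant (h : IsKoenigs u σ H) (hune : ∀ z ∈ ball (0 : ℂ) 1, u z ≠ 0)
    {k : ℂ → ℂ} (hk : DifferentiableOn ℂ k (ball (0 : ℂ) 1))
    (hmap : MapsTo k (ball (0 : ℂ) 1) (ball (0 : ℂ) 1)) (hk0 : k 0 = 0)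
    (hinv : ∀ z ∈ ball (0 : ℂ) 1, k z * u (k z) = deriv k z * (z * u z))
    {z : ℂ} (hz : z ∈ ball (0 : ℂ) 1) : σ (k z) = deriv k 0 * σ z := by
  have h0 : (0 : ℂ) ∈ ball (0 : ℂ) 1 := by simp
  -- `q = (σ ∘ k) / σ`, with the singularity at `0` removed.
  set q : ℂ → ℂ := fun z => dslope k 0 z * Complex.exp (H (k z) - H z) with hq
  have hqσ : ∀ z, q z * σ z = σ (k z) := by
    intro z
    have h1 : z * dslope k 0 z = k z := by simpa [hk0] using sub_smul_dslope k 0 z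
    rw [h.eq, h.eq, hq]
    simp only [Complex.exp_sub]
    have := Complex.exp_ne_zero (H z)
    field_simp
    rw [← h1]; ring
  have hqd : DifferentiableOn ℂ q (ball (0 : ℂ) 1) :=
    ((Complex.differentiableOn_dslope (isOpen_ball.mem_nhds h0)).2 hk).mul
      ((h.diffH.comp hk hmap).sub h.diffH).cexp
  have hq' : ∀ z ∈ ball (0 : ℂ) 1, z ≠ 0 → deriv q z = 0 := by
    intro z hz hz0
    have h1 := (hqd.differentiableAt (isOpen_ball.mem_nhds hz)).hasDerivAt.mul (h.hasDerivAt hz)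
    have h2 := (h.hasDerivAt (hmap hz)).comp z
      (hk.differentiableAt (isOpen_ball.mem_nhds hz)).hasDerivAt
    have h3 : (q * σ) = σ ∘ k := funext hqσ
    rw [h3] at h1
    have h4 := h1.unique h2
    have h5 : σ z ≠ 0 := by
      rw [h.eq]; exact mul_ne_zero hz0 (Complex.exp_ne_zero _)
    have h6 : deriv q z * (σ z * (z * u z)) = 0 := by
      linear_combination (z * u z) * h4 - q z * h.eigen z hz + h.eigen _ (hmap hz)
        - deriv σ (k z) * hinv z hz - u 0 * hqσ z
    exact (mul_eq_zero.1 h6).resolve_right (mul_ne_zero h5 (mul_ne_zero hz0 (hune z hz)))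
  have hq'0 : deriv q 0 = 0 := by
    have hc : ContinuousAt (deriv q) 0 :=
      (hqd.deriv isOpen_ball).continuousOn.continuousAt (isOpen_ball.mem_nhds h0)
    refine tendsto_nhds_unique (hc.tendsto.mono_left (nhdsWithin_le_nhds (s := {0}ᶜ))) ?_
    refine tendsto_const_nhds.congr' ?_
    filter_upwards [self_mem_nhdsWithin, mem_nhdsWithin_of_mem_nhds (isOpen_ball.mem_nhds h0)]
      with y hy hyb
    exact (hq' y hyb hy).symm
  have hconst : q z = q 0 := by
    refine isOpen_ball.is_const_of_deriv_eq_zero (convex_ball (0 : ℂ) 1).isPreconnected hqd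
      (fun y hy => ?_) hz h0
    by_cases hy0 : y = 0
    · rw [hy0, hq'0]; rfl
    · exact hq' y hy hy0
  rw [← hqσ, hconst, hq]
  simp [hk0]

end IsKoenigs

/-! ### The limit of the iterates -/

section Iterates

variable {k : ℂ → ℂ}

lemma differentiableOn_iterate (hk : DifferentiableOn ℂ k (ball (0 : ℂ) 1))
    (hmap : MapsTo k (ball (0 : ℂ) 1) (ball (0 : ℂ) 1)) (n : ℕ) :
    DifferentiableOn ℂ (k^[n]) (ball (0 : ℂ) 1) := by
  induction n with
  | zero => exact differentiableOn_id
  | succ n ih => rw [Function.iterate_succ]; exact ih.comp hk hmap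

lemma deriv_iterate_succ (hk : DifferentiableOn ℂ k (ball (0 : ℂ) 1))
    (hmap : MapsTo k (ball (0 : ℂ) 1) (ball (0 : ℂ) 1)) (n : ℕ) {z : ℂ}
    (hz : z ∈ ball (0 : ℂ) 1) :
    deriv (k^[n + 1]) z = deriv (k^[n]) (k z) * deriv k z := by
  rw [Function.iterate_succ]
  exact deriv_comp z
    ((differentiableOn_iterate hk hmap n).differentiableAt (isOpen_ball.mem_nhds (hmap hz)))
    (hk.differentiableAt (isOpen_ball.mem_nhds hz))

lemma deriv_iterate_ne_zero (hk : DifferentiableOn ℂ k (ball (0 : ℂ) 1))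
    (hmap : MapsTo k (ball (0 : ℂ) 1) (ball (0 : ℂ) 1))
    (hne : ∀ z ∈ ball (0 : ℂ) 1, deriv k z ≠ 0) (n : ℕ) :
    ∀ z ∈ ball (0 : ℂ) 1, deriv (k^[n]) z ≠ 0 := by
  induction n with
  | zero => intro z _; simp
  | succ n ih =>
    intro z hz
    rw [deriv_iterate_succ hk hmap n hz]
    exact mul_ne_zero (ih _ (hmap hz)) (hne z hz)

variable {v : ℂ → ℂ}

lemma limit_comp (hk : DifferentiableOn ℂ k (ball (0 : ℂ) 1))
    (hmap : MapsTo k (ball (0 : ℂ) 1) (ball (0 : ℂ) 1))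
    (hne : ∀ z ∈ ball (0 : ℂ) 1, deriv k z ≠ 0)
    (hlim : TendstoLocallyUniformlyOn
      (fun (n : ℕ) (z : ℂ) => -(k^[n] z) / deriv (k^[n]) z) v atTop (ball (0 : ℂ) 1))
    {z : ℂ} (hz : z ∈ ball (0 : ℂ) 1) : v (k z) = deriv k z * v z := by
  have h1 := hlim.tendsto_at (hmap hz)
  have h2 := (tendsto_add_atTop_iff_nat 1).2 (hlim.tendsto_at hz)
  refine tendsto_nhds_unique h1 ((h2.const_mul (deriv k z)).congr fun n => ?_)
  rw [deriv_iterate_succ hk hmap n hz, Function.iterate_succ_apply]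
  have h3 := hne z hz
  have h4 := deriv_iterate_ne_zero hk hmap hne n _ (hmap hz)
  field_simp

lemma deriv_limit (hk : DifferentiableOn ℂ k (ball (0 : ℂ) 1))
    (hmap : MapsTo k (ball (0 : ℂ) 1) (ball (0 : ℂ) 1)) (hk0 : k 0 = 0)
    (hne : ∀ z ∈ ball (0 : ℂ) 1, deriv k z ≠ 0)
    (hlim : TendstoLocallyUniformlyOn
      (fun (n : ℕ) (z : ℂ) => -(k^[n] z) / deriv (k^[n]) z) v atTop (ball (0 : ℂ) 1)) :
    deriv v 0 = -1 := by
  have h0 : (0 : ℂ) ∈ ball (0 : ℂ) 1 := by simp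
  have hd := fun n => differentiableOn_iterate hk hmap n
  have hne' := fun n => deriv_iterate_ne_zero hk hmap hne n
  have h1 := (hlim.deriv (Eventually.of_forall fun n =>
    (hd n).neg.div ((hd n).deriv isOpen_ball) (hne' n)) isOpen_ball).tendsto_at h0
  refine tendsto_nhds_unique h1 (tendsto_const_nhds.congr fun n => ?_)
  have h2 := ((hd n).differentiableAt (isOpen_ball.mem_nhds h0)).hasDerivAt
  have h3 := (((hd n).deriv isOpen_ball).differentiableAt (isOpen_ball.mem_nhds h0)).hasDerivAt
  have h4 := (h2.neg.div h3 (hne' n 0 h0)).deriv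
  have h5 : k^[n] 0 = 0 := Function.iterate_fixed hk0 n
  have h6 := hne' n 0 h0
  refine Eq.trans ?_ h4.symm
  rw [Pi.neg_apply, h5]
  field_simp
  simp

end Iterates

/-- A holomorphic function with `Re u ≥ 0` and `u 0 ≠ 0` has no zeros, by the open mapping
theorem. -/
lemma ne_zero_of_re_nonneg {u : ℂ → ℂ} (hu : DifferentiableOn ℂ u (ball (0 : ℂ) 1))
    (hure : ∀ z ∈ ball (0 : ℂ) 1, 0 ≤ (u z).re) (hu0 : u 0 ≠ 0) :
    ∀ z ∈ ball (0 : ℂ) 1, u z ≠ 0 := by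
  intro z hz hz0
  have h0 : (0 : ℂ) ∈ ball (0 : ℂ) 1 := by simp
  rcases (hu.analyticOnNhd isOpen_ball).is_constant_or_isOpen
    (convex_ball (0 : ℂ) 1).isPreconnected with ⟨w, hw⟩ | ho
  · exact hu0 (by rw [hw 0 h0, ← hw z hz, hz0])
  · have h1 : u '' ball (0 : ℂ) 1 ∈ 𝓝 (0 : ℂ) :=
      (ho _ subset_rfl isOpen_ball).mem_nhds ⟨z, hz, hz0⟩
    obtain ⟨ε, hε, hsub⟩ := Metric.mem_nhds_iff.1 h1
    obtain ⟨y, hy, hye⟩ := hsub (show (-(ε / 2 : ℝ) : ℂ) ∈ ball (0 : ℂ) ε by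
      rw [mem_ball_zero_iff, norm_neg, Complex.norm_real, Real.norm_of_nonneg (by positivity)]
      linarith)
    have h2 := hure y hy
    rw [hye, Complex.neg_re, Complex.ofReal_re] at h2
    linarith

/-! ### The embedding -/

/-- Embedding criterion: let `μ` be a probability measure on the unit circle, not
concentrated in one point, such that `K_μ' ≠ 0` on `𝔻`, the limit
`v(z) = lim_n -K_μ^{∘n}(z)/(K_μ^{∘n})'(z)` exists locally uniformly on `𝔻` and is of
the form `v(z) = α z u(z)` with `α ≠ 0` and `u` holomorphic with `Re u ≥ 0`, and
`K_μ'(0) = e^{-t₀ u(0)}` for some `t₀ ≥ 0`. Then `μ` embeds into a continuous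
monotone convolution semigroup: there is a continuous composition semigroup of
K-transforms `(K_t)` with generator `u` such that `K_μ = K_{t₀}`. -/
theorem embeddable_of_iterate_limit
    (μ : Measure Circle) (hμ : IsProbabilityMeasure μ)
    (hnotpoint : ¬ ∃ x : Circle, μ = Measure.dirac x)
    (hderiv_ne : ∀ z ∈ ball (0 : ℂ) 1, deriv (Km μ) z ≠ 0)
    (v : ℂ → ℂ)
    (hlim : TendstoLocallyUniformlyOn
      (fun (n : ℕ) (z : ℂ) => -((Km μ)^[n] z) / deriv ((Km μ)^[n]) z)
      v atTop (ball (0 : ℂ) 1))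
    (α : ℂ) (hα : α ≠ 0)
    (u : ℂ → ℂ)
    (hu : DifferentiableOn ℂ u (ball (0 : ℂ) 1))
    (hure : ∀ z ∈ ball (0 : ℂ) 1, 0 ≤ (u z).re)
    (hv : ∀ z ∈ ball (0 : ℂ) 1, v z = α * z * u z)
    (t₀ : ℝ) (ht₀ : 0 ≤ t₀)
    (hK'0 : deriv (Km μ) 0 = Complex.exp (-(t₀ : ℂ) * u 0)) :
    ∃ K : ℝ → ℂ → ℂ,
      (∀ t ≥ (0 : ℝ), DifferentiableOn ℂ (K t) (ball (0 : ℂ) 1)) ∧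
      (∀ t ≥ (0 : ℝ), MapsTo (K t) (ball (0 : ℂ) 1) (ball (0 : ℂ) 1)) ∧
      (∀ t ≥ (0 : ℝ), K t 0 = 0) ∧
      (∀ z ∈ ball (0 : ℂ) 1, K 0 z = z) ∧
      (∀ s ≥ (0 : ℝ), ∀ t ≥ (0 : ℝ), ∀ z ∈ ball (0 : ℂ) 1, K (s + t) z = K s (K t z)) ∧
      (∀ t₁ ≥ (0 : ℝ),
        TendstoLocallyUniformlyOn K (K t₁) (nhdsWithin t₁ (Ici 0)) (ball (0 : ℂ) 1)) ∧
      (∀ z ∈ ball (0 : ℂ) 1, ∀ t ≥ (0 : ℝ),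
        HasDerivWithinAt (fun s => K s z) (-(K t z) * u (K t z)) (Ici 0) t) ∧
      (∀ z ∈ ball (0 : ℂ) 1, Km μ z = K t₀ z) := by
  have h0 : (0 : ℂ) ∈ ball (0 : ℂ) 1 := by simp
  have hk := differentiableOn_Km μ
  have hmap := mapsTo_Km μ
  have hk0 := Km_zero μ
  have hu0 : u 0 ≠ 0 := by
    have h1 := deriv_limit hk hmap hk0 hderiv_ne hlim
    have h2 : v =ᶠ[𝓝 0] fun z => α * z * u z := by
      filter_upwards [isOpen_ball.mem_nhds h0] with z hz using hv z hz
    have h3 := ((hasDerivAt_id (0 : ℂ)).const_mul α).mul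
      (hu.differentiableAt (isOpen_ball.mem_nhds h0)).hasDerivAt
    rw [(h3.congr_of_eventuallyEq h2).deriv] at h1
    intro h4
    simp [h4] at h1
  have hune := ne_zero_of_re_nonneg hu hure hu0
  have hinv : ∀ z ∈ ball (0 : ℂ) 1, Km μ z * u (Km μ z) = deriv (Km μ) z * (z * u z) := by
    intro z hz
    have h1 := limit_comp hk hmap hderiv_ne hlim hz
    rw [hv z hz, hv _ (hmap hz)] at h1
    refine mul_left_cancel₀ hα ?_
    linear_combination h1
  obtain ⟨K, hK⟩ := exists_isFlow hu hure
  obtain ⟨σ, H, hσ⟩ := exists_isKoenigs hu hune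
  have hKd : ∀ t ≥ (0 : ℝ), DifferentiableOn ℂ (K t) (ball (0 : ℂ) 1) :=
    fun t ht => hσ.differentiableOn_flow hu hK ht
  refine ⟨K, hKd, fun t _ z hz => hK.mem_ball hz t, fun t _ => hK.map_zero t, hK.zero,
    fun s hs t ht z hz => hK.add hu hs ht hz, fun t ht => hK.tendstoLocallyUniformlyOn hu ht,
    hK.deriv, ?_⟩
  -- Near `0` the two maps agree because `σ` is injective there.
  refine (hk.analyticOnNhd isOpen_ball).eqOn_of_preconnected_of_eventuallyEq
    ((hKd t₀ ht₀).analyticOnNhd isOpen_ball) (convex_ball (0 : ℂ) 1).isPreconnected h0 ?_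
  have hs := hσ.hasStrictDerivAt h0
  have hleft := hs.eventually_left_inverse (hσ.deriv_ne 0 h0)
  have hc1 : Tendsto (Km μ) (𝓝 0) (𝓝 0) := by
    simpa only [hk0] using (hk.continuousOn.continuousAt (isOpen_ball.mem_nhds h0)).tendsto
  have hc2 : Tendsto (K t₀) (𝓝 0) (𝓝 0) := by
    simpa only [hK.map_zero] using (hK.continuousAt hu h0 ht₀).tendsto
  filter_upwards [hc1.eventually hleft, hc2.eventually hleft, isOpen_ball.mem_nhds h0]
    with z h1 h2 hz
  rw [← h1, ← h2, hσ.comp_of_invariant hune hk hmap hk0 hinv hz, hσ.comp_flow hK hz ht₀, hK'0]
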